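/- arXiv:1509.00850 — 9 statements merged into one kernel-verified Lean document; each statement's English description precedes it below -/
import Mathlib

section
/- Let p, q ∈ ℂ with p + q ≠ 0, let s ∈ ℂ satisfy s² = 1 + 4p + 4q with s ≠ 1, and set w̄₁ = (−1 − s)/(2(p+q)). If |4p/(−1+s)²| + |4q/(−1+s)²| < 1, then the equilibrium w̄₁ of the difference equation w_{n+1} = 1/(1 + p w_n + q w_{n-1}) is locally asymptotically stable. -/
/-- The orbit of Eq.(6) `w_{n+1} = 1/(1 + p w_n + q w_{n-1})` with initial values
`w_{-1} = a`, `w_0 = b` (indexed so that `orbit6 p q a b 0 = w_{-1}`,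
`orbit6 p q a b 1 = w_0`).  Division is Lean's total division; the solution is
"well defined" when every denominator along the orbit is nonzero. -/
noncomputable def orbit6 (p q a b : ℂ) : ℕ → ℂ
  | 0 => a
  | 1 => b
  | n + 2 => 1 / (1 + p * orbit6 p q a b (n + 1) + q * orbit6 p q a b n)

/-- Local asymptotic stability of an equilibrium `e` of Eq.(6): (i) for every `ε > 0`
there is `δ > 0` so that every solution whose initial values satisfy
`|w_0 - e| + |w_{-1} - e| < δ` is well defined (all denominators nonzero) and satisfies
`|w_n - e| < ε` for all `n ≥ -1`; (ii) there is `γ > 0` so that every solution whose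
initial values satisfy `|w_0 - e| + |w_{-1} - e| < γ` converges to `e`. -/
def LocAsympStable6 (p q e : ℂ) : Prop :=
  (∀ ε > (0 : ℝ), ∃ δ > (0 : ℝ), ∀ a b : ℂ, ‖b - e‖ + ‖a - e‖ < δ →
    (∀ n : ℕ, 1 + p * orbit6 p q a b (n + 1) + q * orbit6 p q a b n ≠ 0) ∧
    (∀ n : ℕ, ‖orbit6 p q a b n - e‖ < ε)) ∧
  (∃ γ > (0 : ℝ), ∀ a b : ℂ, ‖b - e‖ + ‖a - e‖ < γ →
    Filter.Tendsto (orbit6 p q a b) Filter.atTop (nhds e))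

/-!
Equation (6) is the iteration of the planar map `T (x, y) = (f (x, y), x)` with
`f (x, y) = 1 / (1 + p x + q y)`. Let `c = (e, e)` be a fixed point of `T` with `‖f' c‖ < 1` for the
sup norm on the plane. Near `c`, the map `T` need not contract because it keeps the coordinate `x`,
but it does not move points away from `c`; and `T²` contracts towards `c`, since both coordinates of
`T² z` are values of `f`. At an equilibrium `e` the partial derivatives of `f` are `-p e²` and
`-q e²`; for `e = w̄₁ = 2 / (1 - s)` these are `-4p / (-1 + s)²` and `-4q / (-1 + s)²`.
-/

open Filter Function Metric Topology

/-- Local asymptotic stability (in the sense of Lyapunov) of the point `c` for the discrete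
dynamical system `z ↦ T z`: orbits starting near `c` stay near `c` and converge to `c`. -/
structure IsAsympStable {X : Type*} [TopologicalSpace X] (T : X → X) (c : X) : Prop where
  stable : ∀ s ∈ 𝓝 c, ∀ᶠ z in 𝓝 c, ∀ n, T^[n] z ∈ s
  attracting : ∀ᶠ z in 𝓝 c, Tendsto (fun n ↦ T^[n] z) atTop (𝓝 c)

section Contraction

variable {X : Type*} [PseudoMetricSpace X] {T : X → X} {c z : X} {r ρ : ℝ}

theorem dist_iterate_le_pow_mul_dist (hρ₀ : 0 ≤ ρ) (hρ₁ : ρ ≤ 1)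
    (hT : ∀ z ∈ ball c r, dist (T z) c ≤ ρ * dist z c) (hz : z ∈ ball c r) (n : ℕ) :
    dist (T^[n] z) c ≤ ρ ^ n * dist z c := by
  induction n with
  | zero => simp
  | succ n ih =>
    have h_mem : T^[n] z ∈ ball c r :=
      (ih.trans (mul_le_of_le_one_left dist_nonneg (pow_le_one₀ hρ₀ hρ₁))).trans_lt hz
    rw [iterate_succ_apply', pow_succ', mul_assoc]
    exact (hT _ h_mem).trans (by gcongr)

theorem dist_iterate_le_dist (hT : ∀ z ∈ ball c r, dist (T z) c ≤ dist z c) (hz : z ∈ ball c r)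
    (n : ℕ) : dist (T^[n] z) c ≤ dist z c := by
  simpa using dist_iterate_le_pow_mul_dist zero_le_one le_rfl (by simpa using hT) hz n

theorem dist_iterate_le_pow_div_mul_dist {k : ℕ} (hρ₀ : 0 ≤ ρ) (hρ₁ : ρ ≤ 1)
    (hT : ∀ z ∈ ball c r, dist (T z) c ≤ dist z c)
    (hTk : ∀ z ∈ ball c r, dist (T^[k] z) c ≤ ρ * dist z c) (hz : z ∈ ball c r) (n : ℕ) :
    dist (T^[n] z) c ≤ ρ ^ (n / k) * dist z c := by
  have h_pow := dist_iterate_le_pow_mul_dist hρ₀ hρ₁ hTk hz (n / k)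
  have h_mem : (T^[k])^[n / k] z ∈ ball c r :=
    (h_pow.trans (mul_le_of_le_one_left dist_nonneg (pow_le_one₀ hρ₀ hρ₁))).trans_lt hz
  calc dist (T^[n] z) c = dist (T^[n % k] ((T^[k])^[n / k] z)) c := by
        rw [← iterate_mul, ← iterate_add_apply, Nat.mod_add_div]
    _ ≤ dist ((T^[k])^[n / k] z) c := dist_iterate_le_dist hT h_mem _
    _ ≤ ρ ^ (n / k) * dist z c := h_pow

theorem isAsympStable_of_iterate_contracting {k : ℕ} (hk : k ≠ 0) (hρ₀ : 0 ≤ ρ) (hρ₁ : ρ < 1)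
    (hT : ∀ᶠ z in 𝓝 c, dist (T z) c ≤ dist z c)
    (hTk : ∀ᶠ z in 𝓝 c, dist (T^[k] z) c ≤ ρ * dist z c) : IsAsympStable T c := by
  obtain ⟨r, hr, h_ball⟩ := eventually_nhds_iff_ball.1 (hT.and hTk)
  have hT' : ∀ z ∈ ball c r, dist (T z) c ≤ dist z c := fun z hz ↦ (h_ball z hz).1
  have hTk' : ∀ z ∈ ball c r, dist (T^[k] z) c ≤ ρ * dist z c := fun z hz ↦ (h_ball z hz).2
  refine ⟨fun s hs ↦ ?_, ?_⟩
  · obtain ⟨ε, hε, h_sub⟩ := Metric.mem_nhds_iff.1 hs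
    filter_upwards [ball_mem_nhds c hr, ball_mem_nhds c hε] with z hzr hzε n
    exact h_sub ((dist_iterate_le_dist hT' hzr n).trans_lt hzε)
  · filter_upwards [ball_mem_nhds c hr] with z hz
    have h_zero : Tendsto (fun n : ℕ ↦ ρ ^ (n / k) * dist z c) atTop (𝓝 0) := by
      simpa using ((tendsto_pow_atTop_nhds_zero_of_lt_one hρ₀ hρ₁).comp
        (Nat.tendsto_div_const_atTop hk)).mul_const (dist z c)
    exact tendsto_iff_dist_tendsto_zero.2 <| squeeze_zero (fun _ ↦ dist_nonneg)
      (dist_iterate_le_pow_div_mul_dist hρ₀ hρ₁.le hT' hTk' hz) h_zero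

end Contraction

/-- The first-order system `(x_n, x_{n-1}) ↦ (x_{n+1}, x_n)` equivalent to the second-order
recurrence `x_{n+1} = f (x_n, x_{n-1})`. -/
def delayMap {X : Type*} (f : X × X → X) (z : X × X) : X × X :=
  (f z, z.1)

theorem isAsympStable_delayMap_of_contracting {X : Type*} [PseudoMetricSpace X] {f : X × X → X}
    {e : X} {ρ : ℝ} (hρ₀ : 0 ≤ ρ) (hρ₁ : ρ < 1)
    (hf : ∀ᶠ z in 𝓝 (e, e), dist (f z) e ≤ ρ * dist z (e, e)) :
    IsAsympStable (delayMap f) (e, e) := by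
  have h_nonexp : ∀ᶠ z in 𝓝 (e, e), dist (delayMap f z) (e, e) ≤ dist z (e, e) := by
    filter_upwards [hf] with z hz
    exact max_le (hz.trans (mul_le_of_le_one_left dist_nonneg hρ₁.le)) (le_max_left _ _)
  have h_tendsto : Tendsto (delayMap f) (𝓝 (e, e)) (𝓝 (e, e)) :=
    tendsto_iff_dist_tendsto_zero.2 <| squeeze_zero' (.of_forall fun _ ↦ dist_nonneg) h_nonexp
      (tendsto_iff_dist_tendsto_zero.1 tendsto_id)
  refine isAsympStable_of_iterate_contracting two_ne_zero hρ₀ hρ₁ h_nonexp ?_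
  filter_upwards [hf, h_nonexp, h_tendsto.eventually hf] with z hz hz_nonexp hTz
  exact max_le (hTz.trans (by gcongr)) hz

theorem isAsympStable_delayMap_of_hasFDerivAt {𝕜 E : Type*} [NontriviallyNormedField 𝕜]
    [NormedAddCommGroup E] [NormedSpace 𝕜 E] {f : E × E → E} {f' : E × E →L[𝕜] E} {e : E}
    (hf : HasFDerivAt f f' (e, e)) (he : f (e, e) = e) (hf' : ‖f'‖ < 1) :
    IsAsympStable (delayMap f) (e, e) := by
  obtain ⟨ρ, hρ, hρ₁⟩ := exists_between hf'
  refine isAsympStable_delayMap_of_contracting ((norm_nonneg f').trans hρ.le) hρ₁ ?_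
  filter_upwards [hf.isLittleO.bound (sub_pos.2 hρ)] with z hz
  rw [he] at hz
  rw [dist_eq_norm, dist_eq_norm]
  calc ‖f z - e‖ ≤ ‖f' (z - (e, e))‖ + ‖f z - e - f' (z - (e, e))‖ :=
        norm_le_norm_add_norm_sub' _ _
    _ ≤ ‖f'‖ * ‖z - (e, e)‖ + (ρ - ‖f'‖) * ‖z - (e, e)‖ := add_le_add (f'.le_opNorm _) hz
    _ = ρ * ‖z - (e, e)‖ := by ring

theorem norm_smul_fst_add_smul_snd_le {𝕜 E : Type*} [NontriviallyNormedField 𝕜]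
    [SeminormedAddCommGroup E] [NormedSpace 𝕜 E] (a b : 𝕜) :
    ‖a • ContinuousLinearMap.fst 𝕜 E E + b • ContinuousLinearMap.snd 𝕜 E E‖ ≤ ‖a‖ + ‖b‖ := by
  refine norm_add_le_of_le ?_ ?_ <;> rw [norm_smul]
  · exact mul_le_of_le_one_right (norm_nonneg a) (ContinuousLinearMap.norm_fst_le 𝕜 E E)
  · exact mul_le_of_le_one_right (norm_nonneg b) (ContinuousLinearMap.norm_snd_le 𝕜 E E)

section Eq6

/-- The right-hand side `(w_n, w_{n-1}) ↦ 1 / (1 + p w_n + q w_{n-1})` of Eq.(6), extended by `0`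
to the points where the denominator vanishes. -/
def eq6Map {𝕜 : Type*} [Field 𝕜] (p q : 𝕜) (z : 𝕜 × 𝕜) : 𝕜 :=
  1 / (1 + p * z.1 + q * z.2)

variable {𝕜 : Type*} [NontriviallyNormedField 𝕜] {p q : 𝕜}

theorem hasFDerivAt_eq6Map {z : 𝕜 × 𝕜} (hz : 1 + p * z.1 + q * z.2 ≠ 0) :
    HasFDerivAt (eq6Map p q) (-(eq6Map p q z ^ 2) •
      (p • ContinuousLinearMap.fst 𝕜 𝕜 𝕜 + q • ContinuousLinearMap.snd 𝕜 𝕜 𝕜)) z := by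
  have h_denom : HasFDerivAt (fun z : 𝕜 × 𝕜 ↦ 1 + p * z.1 + q * z.2)
      (p • ContinuousLinearMap.fst 𝕜 𝕜 𝕜 + q • ContinuousLinearMap.snd 𝕜 𝕜 𝕜) z :=
    ((hasFDerivAt_fst.const_mul p).const_add 1).add (hasFDerivAt_snd.const_mul q)
  have h_inv : eq6Map p q = fun z ↦ (1 + p * z.1 + q * z.2)⁻¹ := funext fun _ ↦ one_div _
  simpa only [h_inv, inv_pow] using! (hasDerivAt_inv hz).comp_hasFDerivAt z h_denom

theorem isAsympStable_delayMap_eq6Map {e : 𝕜} (he : e * (1 + p * e + q * e) = 1)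
    (h : ‖p * e ^ 2‖ + ‖q * e ^ 2‖ < 1) : IsAsympStable (delayMap (eq6Map p q)) (e, e) := by
  have h_fix : eq6Map p q (e, e) = e := (eq_one_div_of_mul_eq_one_left he).symm
  have h_deriv := hasFDerivAt_eq6Map (z := (e, e)) (right_ne_zero_of_mul_eq_one he)
  rw [h_fix] at h_deriv
  refine isAsympStable_delayMap_of_hasFDerivAt h_deriv h_fix ?_
  calc ‖-(e ^ 2) • (p • ContinuousLinearMap.fst 𝕜 𝕜 𝕜 + q • ContinuousLinearMap.snd 𝕜 𝕜 𝕜)‖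
      ≤ ‖e ^ 2‖ * (‖p‖ + ‖q‖) := by
        rw [norm_smul, norm_neg]
        gcongr
        exact norm_smul_fst_add_smul_snd_le p q
    _ = ‖p * e ^ 2‖ + ‖q * e ^ 2‖ := by rw [norm_mul, norm_mul]; ring
    _ < 1 := h

end Eq6

theorem delayMap_eq6Map_iterate (p q a b : ℂ) (n : ℕ) :
    (delayMap (eq6Map p q))^[n] (b, a) = (orbit6 p q a b (n + 1), orbit6 p q a b n) := by
  induction n with
  | zero => rfl
  | succ n ih => rw [iterate_succ_apply', ih]; rfl

theorem locAsympStable6_of_isAsympStable {p q e : ℂ} (he : 1 + p * e + q * e ≠ 0)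
    (h : IsAsympStable (delayMap (eq6Map p q)) (e, e)) : LocAsympStable6 p q e := by
  have dist_le (a b : ℂ) : dist (b, a) (e, e) ≤ ‖b - e‖ + ‖a - e‖ := by
    rw [Prod.dist_eq, dist_eq_norm, dist_eq_norm]
    exact max_le_add_of_nonneg (norm_nonneg _) (norm_nonneg _)
  constructor
  · intro ε hε
    have h_denom : ∀ᶠ z : ℂ × ℂ in 𝓝 (e, e), 1 + p * z.1 + q * z.2 ≠ 0 :=
      ContinuousAt.eventually_ne (by fun_prop) he
    obtain ⟨δ, hδ, h_orbit⟩ := eventually_nhds_iff_ball.1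
      (h.stable _ (h_denom.and (ball_mem_nhds _ hε)))
    refine ⟨δ, hδ, fun a b hab ↦ ?_⟩
    have h_iter := h_orbit (b, a) ((dist_le a b).trans_lt hab)
    simp only [delayMap_eq6Map_iterate] at h_iter
    refine ⟨fun n ↦ (h_iter n).1, fun n ↦ ?_⟩
    rw [← dist_eq_norm]
    exact (le_max_right _ _).trans_lt (h_iter n).2
  · obtain ⟨γ, hγ, h_orbit⟩ := eventually_nhds_iff_ball.1 h.attracting
    refine ⟨γ, hγ, fun a b hab ↦ ?_⟩
    have h_iter := h_orbit (b, a) ((dist_le a b).trans_lt hab)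
    simp only [delayMap_eq6Map_iterate] at h_iter
    exact h_iter.snd_nhds

/-- if `s² = 1 + 4p + 4q`, `s ≠ 1`, and
`|4p/(-1+s)²| + |4q/(-1+s)²| < 1`, then the equilibrium `w̄₁ = (-1-s)/(2(p+q))` of
`w_{n+1} = 1/(1 + p w_n + q w_{n-1})` is locally asymptotically stable. -/
theorem eq6_equilibrium_one_LAS (p q s : ℂ) (hpq : p + q ≠ 0)
    (hs : s ^ 2 = 1 + 4 * p + 4 * q) (hs1 : s ≠ 1)
    (h : ‖4 * p / (-1 + s) ^ 2‖ + ‖4 * q / (-1 + s) ^ 2‖ < 1) :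
    LocAsympStable6 p q ((-1 - s) / (2 * (p + q))) := by
  have hs' : 1 - s ≠ 0 := sub_ne_zero.2 hs1.symm
  have h_eq : (-1 - s) / (2 * (p + q)) = 2 / (1 - s) := by
    rw [div_eq_div_iff (mul_ne_zero two_ne_zero hpq) hs']
    linear_combination hs
  have h_fix : 2 / (1 - s) * (1 + p * (2 / (1 - s)) + q * (2 / (1 - s))) = 1 := by
    field_simp
    linear_combination -hs
  have h_coeff (a : ℂ) : a * (2 / (1 - s)) ^ 2 = 4 * a / (-1 + s) ^ 2 := by
    rw [neg_add_eq_sub, sub_sq_comm, div_pow]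
    ring
  rw [h_eq]
  refine locAsympStable6_of_isAsympStable (right_ne_zero_of_mul_eq_one h_fix)
    (isAsympStable_delayMap_eq6Map h_fix ?_)
  rwa [h_coeff, h_coeff]
end

section
/- Let p, q ∈ ℂ with p + q ≠ 0, let s ∈ ℂ satisfy s² = 1 + 4p + 4q with s ≠ −1, and set w̄₂ = (−1 + s)/(2(p+q)). If |4p/(1+s)²| + |4q/(1+s)²| < 1, then the equilibrium w̄₂ of the difference equation w_{n+1} = 1/(1 + p w_n + q w_{n-1}) is locally asymptotically stable. -/
/-! The linearization at the equilibrium `e` has coefficients `-p e²` and `-q e²`, and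
`e = 2 / (1 + s)`, so the hypothesis says that their norms sum to less than `1`. By continuity some
`k < 1` still bounds the corresponding sum near `e`: a step of the recursion then lands within `k`
times the larger of the two previous distances to `e`, so the distances shrink geometrically, by the
factor `k` every second step. -/

open Filter Topology

section RealSequence

variable {k : ℝ}

theorem le_pow_div_two_mul_of_le_mul_max {u : ℕ → ℝ} {r C : ℝ} (hk₀ : 0 ≤ k) (hk₁ : k ≤ 1)
    (hu : ∀ n, u n < r → u (n + 1) < r → u (n + 2) ≤ k * max (u n) (u (n + 1)))
    (hC₀ : 0 ≤ C) (hCr : C < r) (hu₀ : u 0 ≤ C) (hu₁ : u 1 ≤ C) (n : ℕ) :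
    u n ≤ k ^ (n / 2) * C := by
  have pow_mul_le (m : ℕ) : k ^ m * C ≤ C := mul_le_of_le_one_left hC₀ (pow_le_one₀ hk₀ hk₁)
  induction n using Nat.twoStepInduction with
  | zero => simpa using hu₀
  | one => simpa using hu₁
  | more n ih ih' =>
    have ih'' : u (n + 1) ≤ k ^ (n / 2) * C :=
      ih'.trans (mul_le_mul_of_nonneg_right (pow_le_pow_of_le_one hk₀ hk₁ (by lia)) hC₀)
    calc u (n + 2)
        ≤ k * max (u n) (u (n + 1)) :=
          hu n ((ih.trans (pow_mul_le _)).trans_lt hCr) ((ih''.trans (pow_mul_le _)).trans_lt hCr)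
      _ ≤ k * (k ^ (n / 2) * C) := mul_le_mul_of_nonneg_left (max_le ih ih'') hk₀
      _ = k ^ ((n + 2) / 2) * C := by rw [Nat.add_div_right n two_pos, pow_succ']; ring

theorem tendsto_pow_div_two_mul_atTop_nhds_zero (hk₀ : 0 ≤ k) (hk₁ : k < 1) (C : ℝ) :
    Tendsto (fun n : ℕ => k ^ (n / 2) * C) atTop (𝓝 0) := by
  simpa using ((tendsto_pow_atTop_nhds_zero_of_lt_one hk₀ hk₁).comp
    (Nat.tendsto_div_const_atTop two_ne_zero)).mul_const C

end RealSequence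

section LocalContraction

variable {𝕜 : Type*} [NormedField 𝕜] {p q e : 𝕜}

-- Written as a product, the equilibrium equation `he` also says that the denominator at `e` is
-- nonzero.
theorem norm_one_div_sub_equilibrium_le (he : e * (1 + p * e + q * e) = 1) {x y : 𝕜}
    (hxy : 1 + p * x + q * y ≠ 0) :
    ‖1 / (1 + p * x + q * y) - e‖ ≤
      (‖p‖ + ‖q‖) * ‖e‖ * ‖1 / (1 + p * x + q * y)‖ * max ‖x - e‖ ‖y - e‖ := by
  have error_eq : 1 / (1 + p * x + q * y) - e =
      -(e * (1 / (1 + p * x + q * y)) * (p * (x - e) + q * (y - e))) := by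
    field_simp
    linear_combination -he
  have linear_le : ‖p * (x - e) + q * (y - e)‖ ≤ (‖p‖ + ‖q‖) * max ‖x - e‖ ‖y - e‖ :=
    calc ‖p * (x - e) + q * (y - e)‖
        ≤ ‖p‖ * ‖x - e‖ + ‖q‖ * ‖y - e‖ := by
          simpa only [norm_mul] using norm_add_le (p * (x - e)) (q * (y - e))
      _ ≤ ‖p‖ * max ‖x - e‖ ‖y - e‖ + ‖q‖ * max ‖x - e‖ ‖y - e‖ := by
          gcongr
          exacts [le_max_left _ _, le_max_right _ _]
      _ = (‖p‖ + ‖q‖) * max ‖x - e‖ ‖y - e‖ := (add_mul _ _ _).symm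
  rw [error_eq, norm_neg, norm_mul, norm_mul]
  calc ‖e‖ * ‖1 / (1 + p * x + q * y)‖ * ‖p * (x - e) + q * (y - e)‖
      ≤ ‖e‖ * ‖1 / (1 + p * x + q * y)‖ * ((‖p‖ + ‖q‖) * max ‖x - e‖ ‖y - e‖) := by gcongr
    _ = _ := by ring

theorem exists_local_contraction_at_equilibrium (he : e * (1 + p * e + q * e) = 1)
    (h : (‖p‖ + ‖q‖) * ‖e‖ ^ 2 < 1) :
    ∃ k, 0 ≤ k ∧ k < 1 ∧ ∃ r > 0, ∀ x y : 𝕜, ‖x - e‖ < r → ‖y - e‖ < r →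
      1 + p * x + q * y ≠ 0 ∧
        ‖1 / (1 + p * x + q * y) - e‖ ≤ k * max ‖x - e‖ ‖y - e‖ := by
  obtain ⟨k, hk, hk₁⟩ := exists_between h
  have denom_ne : 1 + p * e + q * e ≠ 0 := right_ne_zero_of_mul_eq_one he
  have denom_cont : ContinuousAt (fun z : 𝕜 × 𝕜 => 1 + p * z.1 + q * z.2) (e, e) := by fun_prop
  have factor_cont : ContinuousAt
      (fun z : 𝕜 × 𝕜 => (‖p‖ + ‖q‖) * ‖e‖ * ‖1 / (1 + p * z.1 + q * z.2)‖) (e, e) :=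
    continuousAt_const.mul (continuousAt_const.div denom_cont denom_ne).norm
  have factor_lt : (‖p‖ + ‖q‖) * ‖e‖ * ‖1 / (1 + p * e + q * e)‖ < k := by
    rwa [← eq_one_div_of_mul_eq_one_left he, mul_assoc, ← sq]
  obtain ⟨r, hr, near⟩ := Metric.eventually_nhds_iff.mp
    ((denom_cont.eventually_ne denom_ne).and (factor_cont.eventually_lt_const factor_lt))
  refine ⟨k, le_trans (by positivity) hk.le, hk₁, r, hr, fun x y hx hy => ?_⟩
  obtain ⟨hxy, hlt⟩ := @near (x, y) (by
    rw [← dist_eq_norm] at hx hy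
    exact max_lt hx hy)
  exact ⟨hxy, (norm_one_div_sub_equilibrium_le he hxy).trans (by gcongr)⟩

end LocalContraction

theorem locAsympStable6_of_norm_add_norm_mul_sq_lt_one {p q e : ℂ}
    (he : e * (1 + p * e + q * e) = 1) (h : (‖p‖ + ‖q‖) * ‖e‖ ^ 2 < 1) :
    LocAsympStable6 p q e := by
  obtain ⟨k, hk₀, hk₁, r, hr, contraction⟩ := exists_local_contraction_at_equilibrium he h
  have decay {a b : ℂ} (hab : ‖b - e‖ + ‖a - e‖ < r) (n : ℕ) :
      ‖orbit6 p q a b n - e‖ ≤ k ^ (n / 2) * (‖b - e‖ + ‖a - e‖) :=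
    le_pow_div_two_mul_of_le_mul_max (u := fun n => ‖orbit6 p q a b n - e‖) hk₀ hk₁.le
      (fun n hn hn' => by simpa only [orbit6, max_comm] using (contraction _ _ hn' hn).2)
      (by positivity) hab (by simp [orbit6]) (by simp [orbit6]) n
  have bounded {a b : ℂ} (hab : ‖b - e‖ + ‖a - e‖ < r) (n : ℕ) :
      ‖orbit6 p q a b n - e‖ ≤ ‖b - e‖ + ‖a - e‖ :=
    (decay hab n).trans (mul_le_of_le_one_left (by positivity) (pow_le_one₀ hk₀ hk₁.le))
  refine ⟨fun ε hε => ⟨min ε r, lt_min hε hr, fun a b hab => ?_⟩, r, hr, fun a b hab => ?_⟩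
  · obtain ⟨habε, habr⟩ := lt_min_iff.mp hab
    have near (n : ℕ) := (bounded habr n).trans_lt habr
    exact ⟨fun n => (contraction _ _ (near (n + 1)) (near n)).1,
      fun n => (bounded habr n).trans_lt habε⟩
  · exact tendsto_iff_norm_sub_tendsto_zero.mpr <| squeeze_zero (fun _ => norm_nonneg _)
      (decay hab) (tendsto_pow_div_two_mul_atTop_nhds_zero hk₀ hk₁ _)

/-- if `s² = 1 + 4p + 4q`, `s ≠ -1`, and
`|4p/(1+s)²| + |4q/(1+s)²| < 1`, then the equilibrium `w̄₂ = (-1+s)/(2(p+q))` of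
`w_{n+1} = 1/(1 + p w_n + q w_{n-1})` is locally asymptotically stable. -/
theorem eq6_equilibrium_two_LAS (p q s : ℂ) (hpq : p + q ≠ 0)
    (hs : s ^ 2 = 1 + 4 * p + 4 * q) (hs1 : s ≠ -1)
    (h : ‖4 * p / (1 + s) ^ 2‖ + ‖4 * q / (1 + s) ^ 2‖ < 1) :
    LocAsympStable6 p q ((-1 + s) / (2 * (p + q))) := by
  have one_add_s_ne : 1 + s ≠ 0 := fun h0 => hs1 (eq_neg_of_add_eq_zero_right h0)
  have equilibrium_eq : (-1 + s) / (2 * (p + q)) = 2 / (1 + s) := by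
    field_simp
    linear_combination hs
  have multiplier_norm (c : ℂ) : ‖4 * c / (1 + s) ^ 2‖ = ‖c‖ * ‖2 / (1 + s)‖ ^ 2 := by
    rw [← norm_pow, ← norm_mul, div_pow]
    ring_nf
  rw [multiplier_norm, multiplier_norm, ← add_mul] at h
  rw [equilibrium_eq]
  refine locAsympStable6_of_norm_add_norm_mul_sq_lt_one ?_ h
  field_simp
  linear_combination -hs
end

section
/- Let p, q ∈ ℂ with |p| > 1. Then the zero equilibrium of the difference equation w_{n+1} = w_{n-1}/(p + q w_n + w_{n-1}) is locally asymptotically stable. -/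
/-- The orbit of Eq.(8) `w_{n+1} = w_{n-1}/(p + q w_n + w_{n-1})` with initial values
`w_{-1} = a`, `w_0 = b` (indexed so that `orbit8 p q a b 0 = w_{-1}`,
`orbit8 p q a b 1 = w_0`).  Division is Lean's total division; the solution is
"well defined" when every denominator along the orbit is nonzero. -/
noncomputable def orbit8 (p q a b : ℂ) : ℕ → ℂ
  | 0 => a
  | 1 => b
  | n + 2 => orbit8 p q a b n / (p + q * orbit8 p q a b (n + 1) + orbit8 p q a b n)

/-- Local asymptotic stability of an equilibrium `e` of Eq.(8): (i) for every `ε > 0`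
there is `δ > 0` so that every solution whose initial values satisfy
`|w_0 - e| + |w_{-1} - e| < δ` is well defined (all denominators nonzero) and satisfies
`|w_n - e| < ε` for all `n ≥ -1`; (ii) there is `γ > 0` so that every solution whose
initial values satisfy `|w_0 - e| + |w_{-1} - e| < γ` converges to `e`. -/
def LocAsympStable8 (p q e : ℂ) : Prop :=
  (∀ ε > (0 : ℝ), ∃ δ > (0 : ℝ), ∀ a b : ℂ, ‖b - e‖ + ‖a - e‖ < δ →
    (∀ n : ℕ, p + q * orbit8 p q a b (n + 1) + orbit8 p q a b n ≠ 0) ∧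
    (∀ n : ℕ, ‖orbit8 p q a b n - e‖ < ε)) ∧
  (∃ γ > (0 : ℝ), ∀ a b : ℂ, ‖b - e‖ + ‖a - e‖ < γ →
    Filter.Tendsto (orbit8 p q a b) Filter.atTop (nhds e))

/-!
Near the origin the denominator `p + q y + x` has modulus larger than some `r > 1`, so as long as
the orbit stays there, `‖w_{n+1}‖ ≤ r⁻¹ ‖w_{n-1}‖`. Such a lag-two contraction cannot leave a ball
containing its two initial values, and it drives the even-indexed and the odd-indexed terms to zero
geometrically.
-/

open Filter Topology

section Lag

variable {α E : Type*} {k : ℕ}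

theorem forall_lt_of_lag_le [Preorder α] {v : ℕ → α} {d : α} (hk : 0 < k)
    (hinit : ∀ i < k, v i < d)
    (hlag : ∀ n, (∀ m < n + k, v m < d) → v (n + k) ≤ v n) (n : ℕ) : v n < d := by
  induction n using Nat.strong_induction_on with
  | _ n ih =>
    rcases lt_or_ge n k with hn | hn
    · exact hinit n hn
    · obtain ⟨m, rfl⟩ := Nat.exists_eq_add_of_le' hn
      exact (hlag m ih).trans_lt (ih m (Nat.lt_add_of_pos_right hk))

theorem tendsto_atTop_of_forall_tendsto_mul_add {u : ℕ → α} {l : Filter α} (hk : 0 < k)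
    (hu : ∀ i < k, Tendsto (fun n ↦ u (k * n + i)) atTop l) : Tendsto u atTop l := by
  refine tendsto_iff_forall_eventually_mem.2 fun s hs ↦ ?_
  have hblock : ∀ᶠ n in atTop, ∀ i < k, u (k * n + i) ∈ s :=
    (eventually_all_finite (Set.finite_lt_nat k)).2 fun i hi ↦ (hu i hi).eventually_mem hs
  filter_upwards [(Nat.tendsto_div_const_atTop hk.ne').eventually hblock] with n hn
  have hmem := hn (n % k) (Nat.mod_lt n hk)
  rwa [Nat.div_add_mod] at hmem

theorem tendsto_zero_of_norm_lag_le [SeminormedAddCommGroup E] {u : ℕ → E} {c : ℝ}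
    (hk : 0 < k) (hc : c < 1) (hu : ∀ᶠ n in atTop, ‖u (n + k)‖ ≤ c * ‖u n‖) :
    Tendsto u atTop (𝓝 0) := by
  refine tendsto_atTop_of_forall_tendsto_mul_add hk fun i _ ↦ ?_
  have hmul : Tendsto (fun n ↦ k * n + i) atTop atTop :=
    (tendsto_add_atTop_nat i).comp (tendsto_id.const_mul_atTop' hk)
  have hratio : ∀ᶠ n in atTop, ‖‖u (k * (n + 1) + i)‖‖ ≤ c * ‖‖u (k * n + i)‖‖ := by
    filter_upwards [hmul.eventually hu] with n hn
    rwa [norm_norm, norm_norm, Nat.mul_succ, Nat.add_right_comm]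
  exact tendsto_zero_iff_norm_tendsto_zero.2
    (summable_of_ratio_norm_eventually_le hc hratio).tendsto_atTop_zero

end Lag

theorem exists_pos_forall_lt_norm_add_mul_add {R : Type*} [NonUnitalSeminormedRing R]
    {p : R} (q : R) {r : ℝ} (hr : r < ‖p‖) :
    ∃ D > 0, ∀ x y : R, ‖x‖ < D → ‖y‖ < D → r < ‖p + q * y + x‖ := by
  have hcont : Continuous fun z : R × R ↦ ‖p + q * z.2 + z.1‖ := by fun_prop
  have hnear : ∀ᶠ z : R × R in 𝓝 0, r < ‖p + q * z.2 + z.1‖ :=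
    hcont.continuousAt.eventually_const_lt (by simpa using hr)
  obtain ⟨D, hD, hball⟩ := Metric.eventually_nhds_iff.1 hnear
  refine ⟨D, hD, fun x y hx hy ↦ hball (y := (x, y)) ?_⟩
  rw [dist_zero_right, Prod.norm_mk]
  exact max_lt hx hy

section Orbit

variable {p q a b : ℂ} {r d : ℝ}

theorem norm_orbit8_add_two_le {n : ℕ} (hr : 0 < r)
    (hden : r ≤ ‖p + q * orbit8 p q a b (n + 1) + orbit8 p q a b n‖) :
    ‖orbit8 p q a b (n + 2)‖ ≤ r⁻¹ * ‖orbit8 p q a b n‖ := by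
  rw [orbit8, norm_div, ← div_eq_inv_mul]
  gcongr

theorem norm_orbit8_lt (hr : 1 ≤ r)
    (hden : ∀ x y : ℂ, ‖x‖ < d → ‖y‖ < d → r ≤ ‖p + q * y + x‖)
    (ha : ‖a‖ < d) (hb : ‖b‖ < d) (n : ℕ) : ‖orbit8 p q a b n‖ < d := by
  refine forall_lt_of_lag_le (v := fun n ↦ ‖orbit8 p q a b n‖) two_pos ?_ (fun m hm ↦ ?_) n
  · intro i hi
    interval_cases i
    · exact ha
    · exact hb
  · have hle := norm_orbit8_add_two_le (zero_lt_one.trans_le hr)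
      (hden _ _ (hm m (by lia)) (hm (m + 1) (by lia)))
    exact hle.trans (mul_le_of_le_one_left (norm_nonneg _) (inv_le_one_of_one_le₀ hr))

theorem le_norm_orbit8_denom (hr : 1 ≤ r)
    (hden : ∀ x y : ℂ, ‖x‖ < d → ‖y‖ < d → r ≤ ‖p + q * y + x‖)
    (ha : ‖a‖ < d) (hb : ‖b‖ < d) (n : ℕ) :
    r ≤ ‖p + q * orbit8 p q a b (n + 1) + orbit8 p q a b n‖ :=
  hden _ _ (norm_orbit8_lt hr hden ha hb n) (norm_orbit8_lt hr hden ha hb (n + 1))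

theorem tendsto_orbit8_zero (hr : 1 < r)
    (hden : ∀ n, r ≤ ‖p + q * orbit8 p q a b (n + 1) + orbit8 p q a b n‖) :
    Tendsto (orbit8 p q a b) atTop (𝓝 0) :=
  tendsto_zero_of_norm_lag_le two_pos (inv_lt_one_of_one_lt₀ hr)
    (.of_forall fun n ↦ norm_orbit8_add_two_le (zero_lt_one.trans hr) (hden n))

end Orbit

/-- if `|p| > 1` then the zero equilibrium of
`w_{n+1} = w_{n-1}/(p + q w_n + w_{n-1})` is locally asymptotically stable. -/
theorem eq8_zero_equilibrium_LAS (p q : ℂ) (hp : 1 < ‖p‖) :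
    LocAsympStable8 p q 0 := by
  obtain ⟨r, hr, hrp⟩ := exists_between hp
  obtain ⟨D, hD, hden⟩ := exists_pos_forall_lt_norm_add_mul_add q hrp
  have hinit : ∀ {a b : ℂ} {d : ℝ}, ‖b‖ + ‖a‖ < d → ‖a‖ < d ∧ ‖b‖ < d := fun hab ↦
    ⟨(le_add_of_nonneg_left (norm_nonneg _)).trans_lt hab,
      (le_add_of_nonneg_right (norm_nonneg _)).trans_lt hab⟩
  simp only [LocAsympStable8, sub_zero]
  constructor
  · intro ε hε
    have hden_min : ∀ x y : ℂ, ‖x‖ < min ε D → ‖y‖ < min ε D → r ≤ ‖p + q * y + x‖ :=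
      fun x y hx hy ↦ (hden x y (lt_min_iff.1 hx).2 (lt_min_iff.1 hy).2).le
    refine ⟨min ε D, lt_min hε hD, fun a b hab ↦ ?_⟩
    obtain ⟨ha, hb⟩ := hinit hab
    exact ⟨fun n ↦ norm_pos_iff.1 <|
        (zero_lt_one.trans hr).trans_le (le_norm_orbit8_denom hr.le hden_min ha hb n),
      fun n ↦ (norm_orbit8_lt hr.le hden_min ha hb n).trans_le (min_le_left ε D)⟩
  · refine ⟨D, hD, fun a b hab ↦ ?_⟩
    obtain ⟨ha, hb⟩ := hinit hab
    exact tendsto_orbit8_zero hr <|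
      le_norm_orbit8_denom hr.le (fun x y hx hy ↦ (hden x y hx hy).le) ha hb
end

section
/- Let p, q ∈ ℂ with 0 < |p| < 1. Then the zero equilibrium of the difference equation w_{n+1} = w_{n-1}/(p + q w_n + w_{n-1}) is a repeller: there exists r > 0 such that for every solution (w_n) of the equation (well defined for all n) with 0 < |w_0| + |w_{-1}| < r, there exists n ≥ 0 with |w_n| ≥ r. -/
/-! Near the origin the denominator has norm at most some `c < 1`, so a solution that stays there
satisfies `‖w n‖ ≤ c * ‖w (n + 2)‖`. Taking suprema, `S = sup ‖w n‖` is finite and `S ≤ c * S`,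
which forces `S = 0`. -/

open Set

theorem nonpos_of_le_mul_comp {ι : Type*} {u : ι → ℝ} {σ : ι → ι} {c : ℝ} (hc₀ : 0 ≤ c)
    (hc₁ : c < 1) (hu : BddAbove (range u)) (h : ∀ i, u i ≤ c * u (σ i)) (i : ι) : u i ≤ 0 := by
  have : Nonempty ι := ⟨i⟩
  have iSup_le_mul : ⨆ j, u j ≤ c * ⨆ j, u j :=
    ciSup_le fun j ↦ (h j).trans (mul_le_mul_of_nonneg_left (le_ciSup hu (σ j)) hc₀)
  have iSup_nonpos : ⨆ j, u j ≤ 0 := by nlinarith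
  exact (le_ciSup hu i).trans iSup_nonpos

theorem eq_zero_of_comp_eq_div {𝕜 ι : Type*} [NormedDivisionRing 𝕜] {w a : ι → 𝕜} {σ : ι → ι}
    {c : ℝ} (hc : c < 1) (ha : ∀ i, a i ≠ 0) (hac : ∀ i, ‖a i‖ ≤ c)
    (hw : ∀ i, w (σ i) = w i / a i) (hb : BddAbove (range fun i ↦ ‖w i‖)) (i : ι) : w i = 0 := by
  have hc₀ : 0 ≤ c := (norm_nonneg _).trans (hac i)
  have norm_le_mul : ∀ j, ‖w j‖ ≤ c * ‖w (σ j)‖ := fun j ↦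
    calc
      ‖w j‖ = ‖a j‖ * ‖w (σ j)‖ := by
        rw [hw, norm_div, mul_div_cancel₀ _ (norm_ne_zero_iff.2 (ha j))]
      _ ≤ c * ‖w (σ j)‖ := mul_le_mul_of_nonneg_right (hac j) (norm_nonneg _)
  exact norm_le_zero_iff.1 (nonpos_of_le_mul_comp hc₀ hc hb norm_le_mul i)

theorem eq8_zero_equilibrium_repeller_general {𝕜 : Type*} [NormedDivisionRing 𝕜] {d : 𝕜 × 𝕜 → 𝕜}
    (hd : ContinuousAt d 0) (hd₁ : ‖d 0‖ < 1) :
    ∃ r > (0 : ℝ), ∀ w : ℕ → 𝕜,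
      (∀ n : ℕ, d (w (n + 1), w n) ≠ 0) →
      (∀ n : ℕ, w (n + 2) = w n / d (w (n + 1), w n)) →
      0 < ‖w 1‖ + ‖w 0‖ → ‖w 1‖ + ‖w 0‖ < r →
      ∃ n : ℕ, r ≤ ‖w (n + 1)‖ := by
  obtain ⟨c, hdc, hc₁⟩ := exists_between hd₁
  obtain ⟨r, hr, norm_d_lt⟩ :=
    Metric.eventually_nhds_iff_ball.1 (hd.norm.eventually_lt_const hdc)
  refine ⟨r, hr, fun w hne hrec hpos hlt ↦ ?_⟩
  by_contra! hsmall
  have norm_lt : ∀ n, ‖w n‖ < r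
    | 0 => by linarith [norm_nonneg (w 1)]
    | n + 1 => hsmall n
  have norm_denom_le (n : ℕ) : ‖d (w (n + 1), w n)‖ ≤ c :=
    (norm_d_lt _ (mem_ball_zero_iff.2 (max_lt (norm_lt (n + 1)) (norm_lt n)))).le
  have eq_zero : ∀ n, w n = 0 :=
    eq_zero_of_comp_eq_div hc₁ hne norm_denom_le hrec ⟨r, forall_mem_range.2 fun n ↦ (norm_lt n).le⟩
  simp [eq_zero] at hpos

/-- if `0 < |p| < 1` then the zero equilibrium of
`w_{n+1} = w_{n-1}/(p + q w_n + w_{n-1})` is a repeller: there is `r > 0` such that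
every well-defined solution with `0 < |w_0| + |w_{-1}| < r` has `|w_n| ≥ r` for some
`n ≥ 0`.  Sequences are indexed by `ℕ` with `w 0 = w_{-1}`, `w 1 = w_0`. -/
theorem eq8_zero_equilibrium_repeller (p q : ℂ) (hp0 : 0 < ‖p‖) (hp1 : ‖p‖ < 1) :
    ∃ r > (0 : ℝ), ∀ w : ℕ → ℂ,
      (∀ n : ℕ, p + q * w (n + 1) + w n ≠ 0) →
      (∀ n : ℕ, w (n + 2) = w n / (p + q * w (n + 1) + w n)) →
      0 < ‖w 1‖ + ‖w 0‖ → ‖w 1‖ + ‖w 0‖ < r →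
      ∃ n : ℕ, r ≤ ‖w (n + 1)‖ :=
  eq8_zero_equilibrium_repeller_general (d := fun z ↦ p + q * z.1 + z.2) (by fun_prop)
    (by simpa using hp1)
end

section
/- Let p, q ∈ ℂ with q ≠ −1 and set w̄ = (1−p)/(1+q). The linearization of the difference equation w_{n+1} = w_{n-1}/(p + q w_n + w_{n-1}) at the equilibrium w̄ has coefficients a₀ = −q(1−p)/(1+q) (coefficient of w_n) and a₁ = (p+q)/(1+q) (coefficient of w_{n-1}); consequently, if |q(1−p)| + |p+q| < |1+q| then the equilibrium w̄ is locally asymptotically stable. -/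
/-!
In the maximum metric on pairs, let `D n` be the distance from the state `(w (n + 1), w n)` to the
equilibrium `(e, e)`. If near the equilibrium `dist (f z) e ≤ c * dist z (e, e)` with `c < 1`, then
one step of `w (n + 2) = f (w (n + 1), w n)` does not increase `D`, because it keeps one coordinate,
while two steps replace both coordinates and multiply `D` by at most `c`. Hence `D` decays
geometrically. Any `c > ‖L‖`, where `L` is the derivative of `f` at `(e, e)`, is such a constant,
and with partial derivatives `a₀`, `a₁` one has `‖L‖ ≤ ‖a₀‖ + ‖a₁‖`.
-/

open Filter Topology Metric

lemma le_pow_div_two_mul {u : ℕ → ℝ} {c : ℝ} (hc : 0 ≤ c) (h₁ : u 1 ≤ u 0)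
    (h : ∀ n, u (n + 2) ≤ c * u n) (n : ℕ) : u n ≤ c ^ (n / 2) * u 0 := by
  induction n using Nat.twoStepInduction with
  | zero => simp
  | one => simpa using h₁
  | more n ih _ =>
    calc u (n + 2) ≤ c * (c ^ (n / 2) * u 0) := (h n).trans (by gcongr)
      _ = c ^ ((n + 2) / 2) * u 0 := by rw [Nat.add_div_right n two_pos, pow_succ']; ring

/-- Local asymptotic stability of `e` for the recurrence `w (n + 2) = f (w (n + 1), w n)`: orbits
starting near `(e, e)` in the space of states `(w (n + 1), w n)` stay near `(e, e)` and converge.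
The neighborhood `U` of states can also encode nonvanishing of a denominator along the orbit. -/
def IsLocAsympStable {X : Type*} [TopologicalSpace X] (f : X × X → X) (e : X) : Prop :=
  ∀ U ∈ 𝓝 (e, e), ∃ V ∈ 𝓝 (e, e), ∀ w : ℕ → X, (∀ n, w (n + 2) = f (w (n + 1), w n)) →
    (w 1, w 0) ∈ V → (∀ n, (w (n + 1), w n) ∈ U) ∧ Tendsto w atTop (𝓝 e)

section Recurrence

variable {X : Type*} [PseudoMetricSpace X] {f : X × X → X} {e : X} {c r : ℝ} {w : ℕ → X}

lemma dist_state_le_pow_mul (hc₀ : 0 ≤ c) (hc₁ : c ≤ 1)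
    (hf : ∀ z ∈ ball (e, e) r, dist (f z) e ≤ c * dist z (e, e))
    (hw : ∀ n, w (n + 2) = f (w (n + 1), w n)) (h₀ : (w 1, w 0) ∈ ball (e, e) r) (n : ℕ) :
    dist (w (n + 1), w n) (e, e) ≤ c ^ (n / 2) * dist (w 1, w 0) (e, e) := by
  set D : ℕ → ℝ := fun n => dist (w (n + 1), w n) (e, e)
  have next_le (n : ℕ) (hn : D n < r) : dist (w (n + 2)) e ≤ c * D n := hw n ▸ hf _ hn
  have succ_le (n : ℕ) (hn : D n < r) : D (n + 1) ≤ D n :=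
    max_le ((next_le n hn).trans (mul_le_of_le_one_left dist_nonneg hc₁)) (le_max_left _ _)
  have lt_radius (n : ℕ) : D n < r := by
    induction n with
    | zero => exact h₀
    | succ n ih => exact (succ_le n ih).trans_lt ih
  refine le_pow_div_two_mul hc₀ (succ_le 0 h₀) (fun n => ?_) n
  exact max_le
    ((next_le (n + 1) (lt_radius _)).trans
      (mul_le_mul_of_nonneg_left (succ_le n (lt_radius n)) hc₀))
    (next_le n (lt_radius n))

lemma tendsto_of_dist_state_le_pow_mul {C : ℝ} (hc₀ : 0 ≤ c) (hc₁ : c < 1)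
    (h : ∀ n, dist (w (n + 1), w n) (e, e) ≤ c ^ (n / 2) * C) : Tendsto w atTop (𝓝 e) := by
  have decay : Tendsto (fun n : ℕ => c ^ (n / 2) * C) atTop (𝓝 0) := by
    simpa using ((tendsto_pow_atTop_nhds_zero_of_lt_one hc₀ hc₁).comp
      (Nat.tendsto_div_const_atTop two_ne_zero)).mul_const C
  exact tendsto_iff_dist_tendsto_zero.2
    (squeeze_zero (fun _ => dist_nonneg) (fun n => (le_max_right _ _).trans (h n)) decay)

theorem isLocAsympStable_of_eventually_dist_le (hc₀ : 0 ≤ c) (hc₁ : c < 1)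
    (hf : ∀ᶠ z in 𝓝 (e, e), dist (f z) e ≤ c * dist z (e, e)) : IsLocAsympStable f e := by
  intro U hU
  obtain ⟨δ, δ_pos, hδ⟩ := Metric.mem_nhds_iff.1 (inter_mem hU hf)
  refine ⟨ball (e, e) δ, ball_mem_nhds _ δ_pos, fun w hw h₀ => ?_⟩
  have decay := dist_state_le_pow_mul hc₀ hc₁.le (fun z hz => (hδ hz).2) hw h₀
  refine ⟨fun n => (hδ ?_).1, tendsto_of_dist_state_le_pow_mul hc₀ hc₁ decay⟩
  calc dist (w (n + 1), w n) (e, e)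
      ≤ c ^ (n / 2) * dist (w 1, w 0) (e, e) := decay n
    _ ≤ dist (w 1, w 0) (e, e) := mul_le_of_le_one_left dist_nonneg (pow_le_one₀ hc₀ hc₁.le)
    _ < δ := h₀

end Recurrence

section Linearization

variable {𝕜 E F : Type*} [NontriviallyNormedField 𝕜] [NormedAddCommGroup E] [NormedSpace 𝕜 E]
  [NormedAddCommGroup F] [NormedSpace 𝕜 F]

lemma eventually_dist_le_mul_of_hasFDerivAt {f : E → F} {L : E →L[𝕜] F} {x : E} {c : ℝ}
    (hf : HasFDerivAt f L x) (hc : ‖L‖ < c) : ∀ᶠ z in 𝓝 x, dist (f z) (f x) ≤ c * dist z x := by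
  filter_upwards [hf.isLittleO.def (sub_pos.2 hc)] with z hz
  rw [dist_eq_norm, dist_eq_norm]
  calc ‖f z - f x‖ ≤ ‖L (z - x)‖ + ‖f z - f x - L (z - x)‖ := norm_le_norm_add_norm_sub' _ _
    _ ≤ ‖L‖ * ‖z - x‖ + (c - ‖L‖) * ‖z - x‖ := add_le_add (L.le_opNorm _) hz
    _ = c * ‖z - x‖ := by ring

theorem isLocAsympStable_of_hasFDerivAt {f : E × E → E} {L : E × E →L[𝕜] E} {e : E}
    (hf : HasFDerivAt f L (e, e)) (he : f (e, e) = e) (hL : ‖L‖ < 1) : IsLocAsympStable f e := by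
  obtain ⟨c, hLc, hc₁⟩ := exists_between hL
  have contract := eventually_dist_le_mul_of_hasFDerivAt hf hLc
  rw [he] at contract
  exact isLocAsympStable_of_eventually_dist_le ((norm_nonneg L).trans hLc.le) hc₁ contract

variable (𝕜) in
/-- The linear map `(x, y) ↦ a₀ x + a₁ y`, the right-hand side of the linearized equation
`w_{n+1} = a₀ w_n + a₁ w_{n-1}`. -/
def linearizedMap (a₀ a₁ : 𝕜) : 𝕜 × 𝕜 →L[𝕜] 𝕜 :=
  a₀ • .fst 𝕜 𝕜 𝕜 + a₁ • .snd 𝕜 𝕜 𝕜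

lemma linearizedMap_apply (a₀ a₁ : 𝕜) (z : 𝕜 × 𝕜) :
    linearizedMap 𝕜 a₀ a₁ z = a₀ * z.1 + a₁ * z.2 := rfl

lemma norm_linearizedMap_le (a₀ a₁ : 𝕜) : ‖linearizedMap 𝕜 a₀ a₁‖ ≤ ‖a₀‖ + ‖a₁‖ := by
  refine ContinuousLinearMap.opNorm_le_bound _ (by positivity) fun z => ?_
  calc ‖a₀ * z.1 + a₁ * z.2‖ ≤ ‖a₀‖ * ‖z.1‖ + ‖a₁‖ * ‖z.2‖ := by
        simpa only [norm_mul] using norm_add_le (a₀ * z.1) (a₁ * z.2)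
    _ ≤ ‖a₀‖ * ‖z‖ + ‖a₁‖ * ‖z‖ := by gcongr; exacts [norm_fst_le z, norm_snd_le z]
    _ = (‖a₀‖ + ‖a₁‖) * ‖z‖ := by ring

variable {f : 𝕜 × 𝕜 → 𝕜} {a₀ a₁ x y : 𝕜}

lemma hasDerivAt_fst_of_linearizedMap (hf : HasFDerivAt f (linearizedMap 𝕜 a₀ a₁) (x, y)) :
    HasDerivAt (fun t => f (t, y)) a₀ x := by
  simpa [linearizedMap_apply, Function.comp_def] using
    hf.comp_hasDerivAt x ((hasDerivAt_id x).prodMk (hasDerivAt_const x y))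

lemma hasDerivAt_snd_of_linearizedMap (hf : HasFDerivAt f (linearizedMap 𝕜 a₀ a₁) (x, y)) :
    HasDerivAt (fun t => f (x, t)) a₁ y := by
  simpa [linearizedMap_apply, Function.comp_def] using
    hf.comp_hasDerivAt y ((hasDerivAt_const y x).prodMk (hasDerivAt_id y))

theorem isLocAsympStable_of_norm_add_norm_lt_one {e : 𝕜}
    (hf : HasFDerivAt f (linearizedMap 𝕜 a₀ a₁) (e, e)) (he : f (e, e) = e)
    (h : ‖a₀‖ + ‖a₁‖ < 1) : IsLocAsympStable f e :=
  isLocAsympStable_of_hasFDerivAt hf he ((norm_linearizedMap_le a₀ a₁).trans_lt h)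

end Linearization

section RationalMap

variable {𝕜 : Type*} [NontriviallyNormedField 𝕜]

/-- The function `f(x, y) = y / (p + q x + y)` on pairs, so that Eq.(8) reads
`w_{n+1} = f(w_n, w_{n-1})`. -/
def rationalMap8 (p q : 𝕜) (z : 𝕜 × 𝕜) : 𝕜 := z.2 / (p + q * z.1 + z.2)

lemma hasFDerivAt_rationalMap8 {p q x y : 𝕜} (h : p + q * x + y ≠ 0) :
    HasFDerivAt (rationalMap8 p q)
      (linearizedMap 𝕜 (-(q * y) / (p + q * x + y) ^ 2) ((p + q * x) / (p + q * x + y) ^ 2))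
      (x, y) := by
  have denom : HasFDerivAt (fun z : 𝕜 × 𝕜 => p + q * z.1 + z.2) (linearizedMap 𝕜 q 1) (x, y) := by
    refine (((hasFDerivAt_fst.const_mul q).const_add p).add hasFDerivAt_snd).congr_fderiv ?_
    simp only [linearizedMap, one_smul]
  have quotient := hasFDerivAt_snd.mul ((hasDerivAt_inv h).comp_hasFDerivAt (x, y) denom)
  refine (quotient.congr_of_eventuallyEq (.of_forall fun z => div_eq_mul_inv _ _)).congr_fderiv
    (ContinuousLinearMap.ext fun z => ?_)
  change y * (-((p + q * x + y) ^ 2)⁻¹ * (q * z.1 + 1 * z.2)) + (p + q * x + y)⁻¹ * z.2 =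
    -(q * y) / (p + q * x + y) ^ 2 * z.1 + (p + q * x) / (p + q * x + y) ^ 2 * z.2
  field_simp
  ring

lemma hasFDerivAt_rationalMap8_equilibrium {p q e : 𝕜} (he : p + q * e + e = 1) :
    HasFDerivAt (rationalMap8 p q) (linearizedMap 𝕜 (-(q * e)) (1 - e)) (e, e) := by
  have derivative := hasFDerivAt_rationalMap8 (he.trans_ne one_ne_zero)
  rwa [he, one_pow, div_one, div_one, eq_sub_of_add_eq he] at derivative

theorem isLocAsympStable_rationalMap8 {p q e : 𝕜} (he : p + q * e + e = 1)
    (h : ‖q * e‖ + ‖1 - e‖ < 1) : IsLocAsympStable (rationalMap8 p q) e := by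
  have fixed : rationalMap8 p q (e, e) = e := by simp only [rationalMap8, he, div_one]
  exact isLocAsympStable_of_norm_add_norm_lt_one (hasFDerivAt_rationalMap8_equilibrium he) fixed
    (by rwa [norm_neg])

end RationalMap

section Orbit

variable {p q e : ℂ}

lemma orbit8_add_two (p q a b : ℂ) (n : ℕ) :
    orbit8 p q a b (n + 2) = rationalMap8 p q (orbit8 p q a b (n + 1), orbit8 p q a b n) := by
  simp only [orbit8, rationalMap8]

lemma IsLocAsympStable.exists_forall_orbit8 (h : IsLocAsympStable (rationalMap8 p q) e)
    {U : Set (ℂ × ℂ)} (hU : U ∈ 𝓝 (e, e)) :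
    ∃ δ > (0 : ℝ), ∀ a b : ℂ, ‖b - e‖ + ‖a - e‖ < δ →
      (∀ n, (orbit8 p q a b (n + 1), orbit8 p q a b n) ∈ U) ∧
        Tendsto (orbit8 p q a b) atTop (𝓝 e) := by
  obtain ⟨V, hV, orbit_of_mem⟩ := h U hU
  obtain ⟨δ, δ_pos, hδ⟩ := Metric.mem_nhds_iff.1 hV
  refine ⟨δ, δ_pos, fun a b hab => orbit_of_mem _ (orbit8_add_two p q a b) (hδ ?_)⟩
  rw [mem_ball, dist_eq_norm]
  calc ‖(b, a) - (e, e)‖ ≤ ‖b - e‖ + ‖a - e‖ :=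
        max_le_add_of_nonneg (norm_nonneg _) (norm_nonneg _)
    _ < δ := hab

theorem IsLocAsympStable.locAsympStable8 (h : IsLocAsympStable (rationalMap8 p q) e)
    (he : p + q * e + e ≠ 0) : LocAsympStable8 p q e := by
  refine ⟨fun ε hε => ?_, ?_⟩
  · have denom_ne : ∀ᶠ z : ℂ × ℂ in 𝓝 (e, e), p + q * z.1 + z.2 ≠ 0 :=
      ContinuousAt.eventually_ne (by fun_prop) he
    have near : ∀ᶠ z : ℂ × ℂ in 𝓝 (e, e), ‖z.2 - e‖ < ε :=
      ContinuousAt.eventually_lt (by fun_prop) continuousAt_const (by simpa using hε)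
    obtain ⟨δ, δ_pos, hδ⟩ := h.exists_forall_orbit8 (denom_ne.and near)
    exact ⟨δ, δ_pos, fun a b hab => forall_and.1 (hδ a b hab).1⟩
  · obtain ⟨γ, γ_pos, hγ⟩ := h.exists_forall_orbit8 univ_mem
    exact ⟨γ, γ_pos, fun a b hab => (hγ a b hab).2⟩

end Orbit

/-- for `q ≠ -1` and `w̄ = (1-p)/(1+q)`, the linearization of
`w_{n+1} = w_{n-1}/(p + q w_n + w_{n-1})` (with `f(x,y) = y/(p + q x + y)`) at `w̄`
has coefficients `a₀ = ∂f/∂x(w̄,w̄) = -q(1-p)/(1+q)` and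
`a₁ = ∂f/∂y(w̄,w̄) = (p+q)/(1+q)`; consequently, if `|q(1-p)| + |p+q| < |1+q|`
then `w̄` is locally asymptotically stable. -/
theorem eq8_nonzero_equilibrium_LAS (p q : ℂ) (hq : q ≠ -1) :
    deriv (fun x : ℂ => ((1 - p) / (1 + q)) / (p + q * x + (1 - p) / (1 + q)))
        ((1 - p) / (1 + q)) = -q * (1 - p) / (1 + q) ∧
    deriv (fun y : ℂ => y / (p + q * ((1 - p) / (1 + q)) + y))
        ((1 - p) / (1 + q)) = (p + q) / (1 + q) ∧
    (‖q * (1 - p)‖ + ‖p + q‖ < ‖1 + q‖ →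
      LocAsympStable8 p q ((1 - p) / (1 + q))) := by
  have denom_ne : 1 + q ≠ 0 := fun h => hq (eq_neg_of_add_eq_zero_right h)
  have equilibrium : p + q * ((1 - p) / (1 + q)) + (1 - p) / (1 + q) = 1 := by field_simp; ring
  have coeff₀ : q * ((1 - p) / (1 + q)) = q * (1 - p) / (1 + q) := (mul_div_assoc ..).symm
  have coeff₁ : 1 - (1 - p) / (1 + q) = (p + q) / (1 + q) := by field_simp; ring
  have linearization := hasFDerivAt_rationalMap8_equilibrium equilibrium
  rw [coeff₀, ← neg_div, ← neg_mul, coeff₁] at linearization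
  refine ⟨(hasDerivAt_fst_of_linearizedMap linearization).deriv,
    (hasDerivAt_snd_of_linearizedMap linearization).deriv, fun h => ?_⟩
  refine (isLocAsympStable_rationalMap8 equilibrium ?_).locAsympStable8
    (equilibrium.trans_ne one_ne_zero)
  rwa [coeff₀, coeff₁, norm_div, norm_div, ← add_div, div_lt_one (norm_pos_iff.2 denom_ne)]
end

section
/- Let p, q ∈ ℂ with |p| > 1 and let ε > 0 satisfy ε < (|p| − 1)/(|q| + 1). If u, v ∈ ℂ with |u| < ε and |v| < ε, then p + q u + v ≠ 0 and |v/(p + q u + v)| < ε. Consequently, every solution of w_{n+1} = w_{n-1}/(p + q w_n + w_{n-1}) with initial values w_{-1}, w_0 in the open ball B(0, ε) is well defined and remains in B(0, ε) for all n. -/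
/-!
For `‖u‖, ‖v‖ < ε` the reverse triangle inequality gives
`‖p + q * u + v‖ > ‖p‖ - (‖q‖ + 1) * ε ≥ 1`, so dividing `v` by this denominator cannot increase
its norm. The ball of radius `ε` is thus invariant under the recurrence.
-/

theorem norm_sub_lt_norm_add_mul_add {R : Type*} [NonUnitalSeminormedRing R] (p q : R) {u v : R}
    {ε : ℝ} (hu : ‖u‖ ≤ ε) (hv : ‖v‖ < ε) :
    ‖p‖ - (‖q‖ + 1) * ε < ‖p + q * u + v‖ := by
  have norm_mul_le_mul_radius : ‖q * u‖ ≤ ‖q‖ * ε := norm_mul_le_of_le le_rfl hu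
  have norm_sub_le_norm_denom : ‖p‖ - (‖q * u‖ + ‖v‖) ≤ ‖p + q * u + v‖ :=
    calc ‖p‖ - (‖q * u‖ + ‖v‖) ≤ ‖p‖ - ‖q * u + v‖ := by gcongr; exact norm_add_le _ _
      _ ≤ ‖p + (q * u + v)‖ := norm_sub_le_norm_add _ _
      _ = ‖p + q * u + v‖ := by rw [add_assoc]
  linarith

theorem one_lt_norm_add_mul_add {R : Type*} [NonUnitalSeminormedRing R] {p q u v : R} {ε : ℝ}
    (hε : ε ≤ (‖p‖ - 1) / (‖q‖ + 1)) (hu : ‖u‖ ≤ ε) (hv : ‖v‖ < ε) :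
    1 < ‖p + q * u + v‖ := by
  have mul_le_sub_one : ε * (‖q‖ + 1) ≤ ‖p‖ - 1 := (le_div_iff₀ (by positivity)).1 hε
  linarith [norm_sub_lt_norm_add_mul_add p q hu hv]

theorem norm_div_le_norm_of_one_le {𝕜 : Type*} [NormedDivisionRing 𝕜] (v : 𝕜) {d : 𝕜}
    (hd : 1 ≤ ‖d‖) : ‖v / d‖ ≤ ‖v‖ :=
  (norm_div v d).trans_le (div_le_self (norm_nonneg v) hd)

theorem add_mul_add_ne_zero_and_norm_div_lt {𝕜 : Type*} [NormedDivisionRing 𝕜] {p q u v : 𝕜}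
    {ε : ℝ} (hε : ε ≤ (‖p‖ - 1) / (‖q‖ + 1)) (hu : ‖u‖ < ε) (hv : ‖v‖ < ε) :
    p + q * u + v ≠ 0 ∧ ‖v / (p + q * u + v)‖ < ε := by
  have one_lt : 1 < ‖p + q * u + v‖ := one_lt_norm_add_mul_add hε hu.le hv
  exact ⟨norm_pos_iff.1 (one_pos.trans one_lt),
    (norm_div_le_norm_of_one_le v one_lt.le).trans_lt hv⟩

theorem forall_mem_of_second_order_recurrence {α : Type*} {f : α → α → α} {S : Set α}
    (hf : ∀ u ∈ S, ∀ v ∈ S, f u v ∈ S) {w : ℕ → α} (h0 : w 0 ∈ S) (h1 : w 1 ∈ S)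
    (hw : ∀ n, w (n + 2) = f (w (n + 1)) (w n)) (n : ℕ) : w n ∈ S := by
  induction n using Nat.twoStepInduction with
  | zero => exact h0
  | one => exact h1
  | more n ih ih_succ => exact hw n ▸ hf _ ih_succ _ ih

theorem eq8_boundedness_general {𝕜 : Type*} [NormedDivisionRing 𝕜] (p q : 𝕜) {ε : ℝ}
    (hε : ε ≤ (‖p‖ - 1) / (‖q‖ + 1)) :
    (∀ u v : 𝕜, ‖u‖ < ε → ‖v‖ < ε →
      p + q * u + v ≠ 0 ∧ ‖v / (p + q * u + v)‖ < ε) ∧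
    (∀ w : ℕ → 𝕜, ‖w 0‖ < ε → ‖w 1‖ < ε →
      (∀ n : ℕ, w (n + 2) = w n / (p + q * w (n + 1) + w n)) →
      (∀ n : ℕ, p + q * w (n + 1) + w n ≠ 0) ∧ (∀ n : ℕ, ‖w n‖ < ε)) := by
  refine ⟨fun u v => add_mul_add_ne_zero_and_norm_div_lt hε, fun w h0 h1 hw => ?_⟩
  have norm_lt : ∀ n, ‖w n‖ < ε :=
    forall_mem_of_second_order_recurrence (S := {z | ‖z‖ < ε})
      (f := fun u v => v / (p + q * u + v))
      (fun u hu v hv => (add_mul_add_ne_zero_and_norm_div_lt hε hu hv).2) h0 h1 hw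
  exact ⟨fun n => (add_mul_add_ne_zero_and_norm_div_lt hε (norm_lt (n + 1)) (norm_lt n)).1, norm_lt⟩

/-- boundedness for Eq.(8): if `|p| > 1` and `0 < ε < (|p|-1)/(|q|+1)`,
then for `u, v` in the open ball `B(0,ε)` the denominator `p + q u + v` is nonzero and
`|v/(p + q u + v)| < ε`; consequently every solution of
`w_{n+1} = w_{n-1}/(p + q w_n + w_{n-1})` with initial values `w_{-1}, w_0 ∈ B(0,ε)`
is well defined and remains in `B(0,ε)` for all `n`.  Sequences are indexed by `ℕ`
with `w 0 = w_{-1}`, `w 1 = w_0`. -/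
theorem eq8_boundedness (p q : ℂ) (hp : 1 < ‖p‖) (ε : ℝ) (hε : 0 < ε)
    (hεb : ε < (‖p‖ - 1) / (‖q‖ + 1)) :
    (∀ u v : ℂ, ‖u‖ < ε → ‖v‖ < ε →
      p + q * u + v ≠ 0 ∧ ‖v / (p + q * u + v)‖ < ε) ∧
    (∀ w : ℕ → ℂ, ‖w 0‖ < ε → ‖w 1‖ < ε →
      (∀ n : ℕ, w (n + 2) = w n / (p + q * w (n + 1) + w n)) →
      (∀ n : ℕ, p + q * w (n + 1) + w n ≠ 0) ∧ (∀ n : ℕ, ‖w n‖ < ε)) :=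
  eq8_boundedness_general p q hεb.le
end

section
/- Let p, q ∈ ℂ with q ≠ 0 and p ≠ q, and let φ, ψ ∈ ℂ. Then φ and ψ satisfy the period-two equations for Eq.(6), namely 1 + p ψ + q φ ≠ 0, 1 + p φ + q ψ ≠ 0, φ(1 + p ψ + q φ) = 1 and ψ(1 + p φ + q ψ) = 1 with φ ≠ ψ, if and only if φ ≠ ψ, φ + ψ = −1/q and φ ψ = 1/(p − q). In particular, the prime period-two solutions ..., φ, ψ, φ, ψ, ... of Eq.(6) are exactly the pairs of distinct roots of t² + t/q + 1/(p−q) = 0. -/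
/-!
The two period-two equations are exchanged by swapping `φ` and `ψ`, so their difference is divisible
by `φ - ψ`. Cancelling this factor gives `(φ + ψ) * q = -1`, and once the sum is known each of the
two equations reduces to `φ * ψ * (p - q) = 1`.
-/

section CommRing

variable {R : Type*} [CommRing R] {p q φ ψ : R}

theorem add_mul_eq_neg_one_of_period_two_eq [IsCancelMulZero R] (hne : φ ≠ ψ)
    (h : φ * (1 + p * ψ + q * φ) = ψ * (1 + p * φ + q * ψ)) : (φ + ψ) * q = -1 := by
  have factored : (φ - ψ) * ((φ + ψ) * q) = (φ - ψ) * (-1) := by linear_combination h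
  exact mul_left_cancel₀ (sub_ne_zero.mpr hne) factored

theorem mul_one_add_eq_mul_mul_sub_of_add_mul_eq_neg_one (hsum : (φ + ψ) * q = -1) :
    φ * (1 + p * ψ + q * φ) = φ * ψ * (p - q) := by
  linear_combination φ * hsum

theorem period_two_eqs_iff_add_mul_and_mul_mul_sub [IsCancelMulZero R] (hne : φ ≠ ψ) :
    (φ * (1 + p * ψ + q * φ) = 1 ∧ ψ * (1 + p * φ + q * ψ) = 1) ↔
      ((φ + ψ) * q = -1 ∧ φ * ψ * (p - q) = 1) := by
  constructor
  · rintro ⟨hφ, hψ⟩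
    have hsum := add_mul_eq_neg_one_of_period_two_eq hne (hφ.trans hψ.symm)
    exact ⟨hsum, (mul_one_add_eq_mul_mul_sub_of_add_mul_eq_neg_one hsum).symm.trans hφ⟩
  · rintro ⟨hsum, hprod⟩
    have hsum' : (ψ + φ) * q = -1 := add_comm φ ψ ▸ hsum
    have hprod' : ψ * φ * (p - q) = 1 := mul_comm φ ψ ▸ hprod
    exact ⟨(mul_one_add_eq_mul_mul_sub_of_add_mul_eq_neg_one hsum).trans hprod,
      (mul_one_add_eq_mul_mul_sub_of_add_mul_eq_neg_one hsum').trans hprod'⟩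

end CommRing

theorem eq6_period_two_general {K : Type*} [Field K] {p q : K} (hq : q ≠ 0) (hpq : p ≠ q)
    (φ ψ : K) :
    (1 + p * ψ + q * φ ≠ 0 ∧ 1 + p * φ + q * ψ ≠ 0 ∧
      φ * (1 + p * ψ + q * φ) = 1 ∧ ψ * (1 + p * φ + q * ψ) = 1 ∧ φ ≠ ψ) ↔
    (φ ≠ ψ ∧ φ + ψ = -1 / q ∧ φ * ψ = 1 / (p - q)) := by
  rw [eq_div_iff hq, eq_div_iff (sub_ne_zero.mpr hpq)]
  constructor
  · rintro ⟨-, -, hφ, hψ, hne⟩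
    exact ⟨hne, (period_two_eqs_iff_add_mul_and_mul_mul_sub hne).mp ⟨hφ, hψ⟩⟩
  · rintro ⟨hne, hsum_prod⟩
    obtain ⟨hφ, hψ⟩ := (period_two_eqs_iff_add_mul_and_mul_mul_sub hne).mpr hsum_prod
    exact ⟨right_ne_zero_of_mul_eq_one hφ, right_ne_zero_of_mul_eq_one hψ, hφ, hψ, hne⟩

/-- for `q ≠ 0`, `p ≠ q`, the pair `(φ, ψ)` satisfies the period-two
equations of Eq.(6) `w_{n+1} = 1/(1 + p w_n + q w_{n-1})`, i.e. nonvanishing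
denominators, `φ(1 + p ψ + q φ) = 1`, `ψ(1 + p φ + q ψ) = 1` and `φ ≠ ψ`, iff
`φ ≠ ψ`, `φ + ψ = -1/q` and `φ ψ = 1/(p - q)`; i.e. the prime period-two solutions
are exactly the pairs of distinct roots of `t² + t/q + 1/(p-q) = 0`. -/
theorem eq6_period_two (p q : ℂ) (hq : q ≠ 0) (hpq : p ≠ q) (φ ψ : ℂ) :
    (1 + p * ψ + q * φ ≠ 0 ∧ 1 + p * φ + q * ψ ≠ 0 ∧
      φ * (1 + p * ψ + q * φ) = 1 ∧ ψ * (1 + p * φ + q * ψ) = 1 ∧ φ ≠ ψ) ↔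
    (φ ≠ ψ ∧ φ + ψ = -1 / q ∧ φ * ψ = 1 / (p - q)) :=
  eq6_period_two_general hq hpq φ ψ
end

section
/- Let p, q ∈ ℂ with q ≠ 0 and p ≠ q, and let φ, ψ ∈ ℂ with φ ≠ ψ. Then φ and ψ satisfy the period-two equations for Eq.(7), namely 1 + p ψ + q φ ≠ 0, 1 + p φ + q ψ ≠ 0, φ(1 + p ψ + q φ) = ψ and ψ(1 + p φ + q ψ) = φ, if and only if φ + ψ = −2/q and φ ψ = −2/(q(p − q)). -/
/-!
Write `S = φ + ψ` and `P = φ ψ`. Subtracting the two period-two equations gives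
`(φ - ψ) (q S + 2) = 0`, hence `q S = -2`. Given this, `q φ² = -2 φ - q P` turns the first equation
into `(p - q) P = S`, which is symmetric in `φ` and `ψ`, so it is equivalent to the second one too.
No division by `2` occurs, so the argument works over every field.
-/

/-- The period-two equations of `w_{n+1} = w_n / (1 + p w_n + q w_{n-1})` for the alternating
sequence `…, φ, ψ, φ, ψ, …`, with denominators cleared; that the denominators do not vanish is not
part of the definition. -/
def IsPeriodTwoPair {R : Type*} [Semiring R] (p q φ ψ : R) : Prop :=
  φ * (1 + p * ψ + q * φ) = ψ ∧ ψ * (1 + p * φ + q * ψ) = φ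

namespace IsPeriodTwoPair

theorem symm {R : Type*} [Semiring R] {p q φ ψ : R} (h : IsPeriodTwoPair p q φ ψ) :
    IsPeriodTwoPair p q ψ φ :=
  And.symm h

theorem denominator_ne_zero {R : Type*} [Semiring R] {p q φ ψ : R}
    (h : IsPeriodTwoPair p q φ ψ) (hne : φ ≠ ψ) : 1 + p * ψ + q * φ ≠ 0 := by
  obtain ⟨hφ, hψ⟩ := h
  intro hzero
  have hψ_zero : ψ = 0 := by rw [← hφ, hzero, mul_zero]
  have hφ_zero : φ = 0 := by rw [← hψ, hψ_zero, zero_mul]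
  exact hne (hφ_zero.trans hψ_zero.symm)

theorem mul_add_eq_neg_two {R : Type*} [CommRing R] [NoZeroDivisors R] {p q φ ψ : R}
    (h : IsPeriodTwoPair p q φ ψ) (hne : φ ≠ ψ) : q * (φ + ψ) = -2 := by
  have hmul : (φ - ψ) * (q * (φ + ψ) + 2) = 0 := by
    linear_combination h.1 - h.2
  exact eq_neg_of_add_eq_zero_left
    ((mul_eq_zero.mp hmul).resolve_left (sub_ne_zero.mpr hne))

end IsPeriodTwoPair

theorem mul_denominator_eq_iff_of_mul_add_eq_neg_two {R : Type*} [CommRing R] {p q φ ψ : R}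
    (hsum : q * (φ + ψ) = -2) :
    φ * (1 + p * ψ + q * φ) = ψ ↔ (p - q) * (φ * ψ) = φ + ψ := by
  constructor <;> intro h
  · linear_combination h - φ * hsum
  · linear_combination h + φ * hsum

theorem isPeriodTwoPair_iff_of_mul_add_eq_neg_two {R : Type*} [CommRing R] {p q φ ψ : R}
    (hsum : q * (φ + ψ) = -2) :
    IsPeriodTwoPair p q φ ψ ↔ (p - q) * (φ * ψ) = φ + ψ := by
  have hsum_swap : q * (ψ + φ) = -2 := by rwa [add_comm]
  rw [IsPeriodTwoPair, mul_denominator_eq_iff_of_mul_add_eq_neg_two hsum,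
    mul_denominator_eq_iff_of_mul_add_eq_neg_two hsum_swap, mul_comm ψ φ, add_comm ψ φ, and_self]

theorem isPeriodTwoPair_iff {R : Type*} [CommRing R] [NoZeroDivisors R] {p q φ ψ : R}
    (hne : φ ≠ ψ) :
    IsPeriodTwoPair p q φ ψ ↔ q * (φ + ψ) = -2 ∧ (p - q) * (φ * ψ) = φ + ψ := by
  constructor
  · intro h
    have hsum := h.mul_add_eq_neg_two hne
    exact ⟨hsum, (isPeriodTwoPair_iff_of_mul_add_eq_neg_two hsum).mp h⟩
  · rintro ⟨hsum, hprod⟩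
    exact (isPeriodTwoPair_iff_of_mul_add_eq_neg_two hsum).mpr hprod

theorem isPeriodTwoPair_iff_add_eq_div_and_mul_eq_div {K : Type*} [Field K] {p q φ ψ : K}
    (hq : q ≠ 0) (hpq : p ≠ q) (hne : φ ≠ ψ) :
    IsPeriodTwoPair p q φ ψ ↔ φ + ψ = -2 / q ∧ φ * ψ = -2 / (q * (p - q)) := by
  have hsum_iff : q * (φ + ψ) = -2 ↔ φ + ψ = -2 / q := by
    rw [eq_div_iff hq, mul_comm]
  rw [isPeriodTwoPair_iff hne, hsum_iff]
  refine and_congr_right fun hsum => ?_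
  rw [hsum, ← div_div, eq_div_iff (sub_ne_zero.mpr hpq), mul_comm]

theorem eq7_period_two_general {K : Type*} [Field K] {p q φ ψ : K}
    (hq : q ≠ 0) (hpq : p ≠ q) (hne : φ ≠ ψ) :
    (1 + p * ψ + q * φ ≠ 0 ∧ 1 + p * φ + q * ψ ≠ 0 ∧
      φ * (1 + p * ψ + q * φ) = ψ ∧ ψ * (1 + p * φ + q * ψ) = φ) ↔
    (φ + ψ = -2 / q ∧ φ * ψ = -2 / (q * (p - q))) := by
  rw [← isPeriodTwoPair_iff_add_eq_div_and_mul_eq_div hq hpq hne]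
  constructor
  · rintro ⟨-, -, h⟩
    exact h
  · intro h
    exact ⟨h.denominator_ne_zero hne, h.symm.denominator_ne_zero hne.symm, h⟩

/-- for `q ≠ 0`, `p ≠ q` and `φ ≠ ψ`, the pair `(φ, ψ)` satisfies the
period-two equations of Eq.(7) `w_{n+1} = w_n/(1 + p w_n + q w_{n-1})`, i.e.
nonvanishing denominators, `φ(1 + p ψ + q φ) = ψ` and `ψ(1 + p φ + q ψ) = φ`, iff
`φ + ψ = -2/q` and `φ ψ = -2/(q(p - q))`. -/
theorem eq7_period_two (p q : ℂ) (hq : q ≠ 0) (hpq : p ≠ q) (φ ψ : ℂ) (hne : φ ≠ ψ) :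
    (1 + p * ψ + q * φ ≠ 0 ∧ 1 + p * φ + q * ψ ≠ 0 ∧
      φ * (1 + p * ψ + q * φ) = ψ ∧ ψ * (1 + p * φ + q * ψ) = φ) ↔
    (φ + ψ = -2 / q ∧ φ * ψ = -2 / (q * (p - q))) :=
  eq7_period_two_general hq hpq hne
end

section
/- Let p, q ∈ ℂ with p ≠ 1 and c := p + q(1−p) ≠ 0, and let T : ℂ² → ℂ² be the (partially defined) map T(u, v) = (v, u/(p + q v + u)). Then (0, 1−p) is a fixed point of T², and the derivative (Jacobian matrix) of T² at (0, 1−p) is the lower-triangular matrix with diagonal entries 1/c and p and lower-left entry −q(1−p)/c; hence its eigenvalues are 1/(p + q(1−p)) and p, and both eigenvalues lie in the open unit disk if and only if |p + q(1−p)| > 1 and |p| < 1. -/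
/-!
The derivative of a map `(u, v) ↦ (v, f (u, v))` is a companion map `(x, y) ↦ (y, a x + b y)`.
For `f (u, v) = u / (p + q v + u)`, the numerator vanishes on the axis `u = 0`, so `b = 0` there,
and following such a map by a companion map with coefficients `a'` and `b'` gives a lower
triangular map with diagonal `(a, a')`. Along the orbit `(0, 1 - p) ↦ (1 - p, 0)` the denominators
are `c` and `1`, which gives `a = 1 / c` and `a' = p`.
-/

namespace Eq8

section PlanarLinearMaps

variable {R : Type*} [CommRing R] [TopologicalSpace R] [IsTopologicalRing R]

/-- The linear map with matrix `[[a, 0], [b, d]]` in the standard basis of `R × R`. -/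
def lowerTriangular (a b d : R) : R × R →L[R] R × R :=
  (a • ContinuousLinearMap.fst R R R).prod
    (b • ContinuousLinearMap.fst R R R + d • ContinuousLinearMap.snd R R R)

/-- The linear map `(x, y) ↦ (y, a x + b y)`, with companion matrix `[[0, 1], [a, b]]`: one step
of the linear recurrence `w_{n+1} = a w_{n-1} + b w_n` on pairs `(w_{n-1}, w_n)`. -/
def companion (a b : R) : R × R →L[R] R × R :=
  (ContinuousLinearMap.snd R R R).prod
    (a • ContinuousLinearMap.fst R R R + b • ContinuousLinearMap.snd R R R)

theorem lowerTriangular_apply (a b d : R) (x : R × R) :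
    lowerTriangular a b d x = (a * x.1, b * x.1 + d * x.2) := rfl

theorem companion_apply (a b : R) (x : R × R) :
    companion a b x = (x.2, a * x.1 + b * x.2) := rfl

theorem companion_comp_companion_zero (a a' b' : R) :
    (companion a' b').comp (companion a 0) = lowerTriangular a (b' * a) a' := by
  refine ContinuousLinearMap.ext fun x => ?_
  simp only [ContinuousLinearMap.comp_apply, companion_apply, lowerTriangular_apply]
  ext <;> ring

theorem exists_lowerTriangular_eq_smul_iff [IsDomain R] (a b d μ : R) :
    (∃ x : R × R, x ≠ 0 ∧ lowerTriangular a b d x = μ • x) ↔ μ = a ∨ μ = d := by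
  simp only [lowerTriangular_apply, Prod.ext_iff, Prod.smul_fst, Prod.smul_snd, smul_eq_mul]
  constructor
  · rintro ⟨⟨x, y⟩, hxy, hfst, hsnd⟩
    by_cases hx : x = 0
    · subst hx
      have hy : y ≠ 0 := fun hy => hxy (Prod.ext rfl hy)
      exact .inr (mul_right_cancel₀ hy (by simpa using hsnd)).symm
    · exact .inl (mul_right_cancel₀ hx hfst).symm
  · rintro (rfl | rfl)
    · by_cases hμd : μ = d
      · exact ⟨(0, 1), by simp, by simp, by simp [hμd]⟩
      · exact ⟨(μ - d, b), by simp [sub_ne_zero.2 hμd], rfl, by ring⟩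
    · exact ⟨(0, 1), by simp, by simp, by simp⟩

end PlanarLinearMaps

/-- The planar map `T (u, v) = (v, u / (p + q v + u))` equivalent to Eq. (8). It is total: where the
denominator vanishes, the second coordinate is `0`. -/
def planarMap {K : Type*} [Field K] (p q : K) (x : K × K) : K × K :=
  (x.2, x.1 / (p + q * x.2 + x.1))

section Orbit

variable {K : Type*} [Field K] (p q : K)

theorem planarMap_zero_left (v : K) : planarMap p q (0, v) = (v, 0) := by
  simp [planarMap]

theorem planarMap_zero_right (u : K) : planarMap p q (u, 0) = (0, u / (p + u)) := by
  simp [planarMap]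

theorem planarMap_planarMap_zero_one_sub :
    planarMap p q (planarMap p q (0, 1 - p)) = (0, 1 - p) := by
  rw [planarMap_zero_left, planarMap_zero_right, add_sub_cancel, div_one]

end Orbit

section Derivative

variable {𝕜 : Type*} [NontriviallyNormedField 𝕜]

theorem hasFDerivAt_fun_div {E : Type*} [NormedAddCommGroup E] [NormedSpace 𝕜 E]
    {f g : E → 𝕜} {f' g' : E →L[𝕜] 𝕜} {x : E} (hf : HasFDerivAt f f' x)
    (hg : HasFDerivAt g g' x) (hx : g x ≠ 0) :
    HasFDerivAt (fun y => f y / g y) ((g x ^ 2)⁻¹ • (g x • f' - f x • g')) x := by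
  simp only [div_eq_mul_inv]
  refine (hf.mul ((hasDerivAt_inv hx).comp_hasFDerivAt x hg)).congr_fderiv ?_
  ext v
  simp only [Function.comp_apply, add_apply, sub_apply, smul_apply, smul_eq_mul]
  field_simp
  ring

theorem hasFDerivAt_planarMap {p q : 𝕜} {x : 𝕜 × 𝕜} (hx : p + q * x.2 + x.1 ≠ 0) :
    HasFDerivAt (planarMap p q)
      (companion ((p + q * x.2) / (p + q * x.2 + x.1) ^ 2)
        (-q * x.1 / (p + q * x.2 + x.1) ^ 2)) x := by
  have hdenom : HasFDerivAt (fun y : 𝕜 × 𝕜 => p + q * y.2 + y.1)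
      (q • ContinuousLinearMap.snd 𝕜 𝕜 𝕜 + ContinuousLinearMap.fst 𝕜 𝕜 𝕜) x :=
    ((hasFDerivAt_snd.const_mul q).const_add p).add hasFDerivAt_fst
  refine (hasFDerivAt_snd.prodMk (hasFDerivAt_fun_div hasFDerivAt_fst hdenom hx)).congr_fderiv ?_
  refine ContinuousLinearMap.ext fun y => Prod.ext rfl ?_
  simp only [ContinuousLinearMap.prod_apply, ContinuousLinearMap.coe_fst',
    ContinuousLinearMap.coe_snd', add_apply, sub_apply, smul_apply, smul_eq_mul, companion_apply]
  field_simp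
  ring

theorem hasFDerivAt_planarMap_zero_left {p q v : 𝕜} (hv : p + q * v ≠ 0) :
    HasFDerivAt (planarMap p q) (companion (1 / (p + q * v)) 0) (0, v) := by
  simpa [sq, div_self_mul_self'] using
    hasFDerivAt_planarMap (p := p) (q := q) (x := (0, v)) (by simpa using hv)

theorem hasFDerivAt_planarMap_zero_right {p q u : 𝕜} (hu : p + u ≠ 0) :
    HasFDerivAt (planarMap p q) (companion (p / (p + u) ^ 2) (-q * u / (p + u) ^ 2)) (u, 0) := by
  simpa using hasFDerivAt_planarMap (p := p) (q := q) (x := (u, 0)) (by simpa using hu)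

theorem hasFDerivAt_planarMap_comp_self_zero_left {p q v : 𝕜} (hqv : p + q * v ≠ 0)
    (hv : p + v ≠ 0) :
    HasFDerivAt (planarMap p q ∘ planarMap p q)
      (lowerTriangular (1 / (p + q * v)) (-q * v / (p + v) ^ 2 * (1 / (p + q * v)))
        (p / (p + v) ^ 2)) (0, v) := by
  rw [← companion_comp_companion_zero]
  refine HasFDerivAt.comp (0, v) ?_ (hasFDerivAt_planarMap_zero_left hqv)
  rw [planarMap_zero_left]
  exact hasFDerivAt_planarMap_zero_right hv

theorem hasFDerivAt_planarMap_comp_self_zero_one_sub {p q : 𝕜} (hc : p + q * (1 - p) ≠ 0) :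
    HasFDerivAt (planarMap p q ∘ planarMap p q)
      (lowerTriangular (1 / (p + q * (1 - p))) (-q * (1 - p) / (p + q * (1 - p))) p)
      (0, 1 - p) := by
  simpa [div_eq_mul_inv] using hasFDerivAt_planarMap_comp_self_zero_left hc (by simp)

end Derivative

theorem norm_one_div_lt_one_iff {𝕜 : Type*} [NormedDivisionRing 𝕜] {c : 𝕜} (hc : c ≠ 0) :
    ‖1 / c‖ < 1 ↔ 1 < ‖c‖ := by
  rw [one_div, norm_inv, inv_lt_one₀ (norm_pos_iff.2 hc)]

end Eq8

open Eq8 in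
theorem eq8_periodic_point_jacobian_general {𝕜 : Type*} [NontriviallyNormedField 𝕜] (p q : 𝕜)
    (hc : p + q * (1 - p) ≠ 0) :
    let c := p + q * (1 - p)
    let T := planarMap p q
    let L := lowerTriangular (1 / c) (-q * (1 - p) / c) p
    T (T (0, 1 - p)) = (0, 1 - p) ∧
    HasFDerivAt (T ∘ T) L (0, 1 - p) ∧
    (∀ μ : 𝕜, (∃ x : 𝕜 × 𝕜, x ≠ 0 ∧ L x = μ • x) ↔ μ = 1 / c ∨ μ = p) ∧
    ((∀ μ : 𝕜, (μ = 1 / c ∨ μ = p) → ‖μ‖ < 1) ↔ 1 < ‖c‖ ∧ ‖p‖ < 1) := by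
  intro c T L
  refine ⟨planarMap_planarMap_zero_one_sub p q,
    hasFDerivAt_planarMap_comp_self_zero_one_sub hc,
    exists_lowerTriangular_eq_smul_iff _ _ _, ?_⟩
  rw [forall_eq_or_imp, forall_eq, norm_one_div_lt_one_iff hc]

/-- for `p ≠ 1` and `c := p + q(1-p) ≠ 0`, with
`T(u,v) = (v, u/(p + q v + u))` (Eq.(8) as a planar map), the point `(0, 1-p)` is a
fixed point of `T²`, the derivative of `T²` there is the lower-triangular linear map
with matrix `[[1/c, 0], [-q(1-p)/c, p]]`, its eigenvalues are exactly `1/c` and `p`,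
and both lie in the open unit disk iff `|p + q(1-p)| > 1` and `|p| < 1`. -/
theorem eq8_periodic_point_jacobian (p q : ℂ) (hp : p ≠ 1)
    (hc : p + q * (1 - p) ≠ 0) :
    let c : ℂ := p + q * (1 - p)
    let T : ℂ × ℂ → ℂ × ℂ := fun x => (x.2, x.1 / (p + q * x.2 + x.1))
    let L : ℂ × ℂ →L[ℂ] ℂ × ℂ :=
      ((1 / c) • ContinuousLinearMap.fst ℂ ℂ ℂ).prod
        ((-q * (1 - p) / c) • ContinuousLinearMap.fst ℂ ℂ ℂ +
          p • ContinuousLinearMap.snd ℂ ℂ ℂ)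
    T (T (0, 1 - p)) = (0, 1 - p) ∧
    HasFDerivAt (T ∘ T) L (0, 1 - p) ∧
    (∀ μ : ℂ, (∃ x : ℂ × ℂ, x ≠ 0 ∧ L x = μ • x) ↔ μ = 1 / c ∨ μ = p) ∧
    ((∀ μ : ℂ, (μ = 1 / c ∨ μ = p) → ‖μ‖ < 1) ↔
      (1 < ‖p + q * (1 - p)‖ ∧ ‖p‖ < 1)) :=
  eq8_periodic_point_jacobian_general p q hc
end
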